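/- The following are equivalent: (i) μ is hemifinite; (ii) M_F is a Fréchet–Urysohn space; (iii) M_F is a sequential space. -/

import Mathlib

open MeasureTheory Topology Set Pointwise

/-- The set of all real-valued measurable functions on `X`, as a subtype. -/
abbrev Mble (X : Type*) [MeasurableSpace X] : Type _ := {f : X → ℝ // Measurable f}

/-- The basic set `B(f, A, ε)`: all `g` such that for some measurable null set `N`,
`sup_{x ∈ A \ N} |f x - g x| < ε`. -/
def FBall {X : Type*} [MeasurableSpace X] (μ : Measure X) (f : Mble X) (A : Set X)
    (ε : ℝ) : Set (Mble X) :=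
  {g | ∃ N : Set X, MeasurableSet N ∧ μ N = 0 ∧
        ∃ b : ℝ, b < ε ∧ ∀ x ∈ A \ N, |f.1 x - g.1 x| ≤ b}

/-- The `F_μ`-topology on `Mble X`, generated by the sets `B(f, A, ε)` with
`A` measurable of finite measure and `ε > 0`. -/
def FTop {X : Type*} [MeasurableSpace X] (μ : Measure X) : TopologicalSpace (Mble X) :=
  TopologicalSpace.generateFrom
    {S | ∃ (f : Mble X) (A : Set X) (ε : ℝ),
        MeasurableSet A ∧ μ A < ⊤ ∧ 0 < ε ∧ S = FBall μ f A ε}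

/-- A `μ`-atom: a measurable set of positive measure admitting no decomposition into two
disjoint measurable pieces of positive measure. -/
def MuAtom {X : Type*} [MeasurableSpace X] (μ : Measure X) (A : Set X) : Prop :=
  MeasurableSet A ∧ 0 < μ A ∧
    ¬ ∃ B C : Set X, MeasurableSet B ∧ MeasurableSet C ∧ Disjoint B C ∧
        B ∪ C = A ∧ 0 < μ B ∧ 0 < μ C

/-- `G` is a union of finitely many `μ`-atoms. -/
def FinAtomUnion {X : Type*} [MeasurableSpace X] (μ : Measure X) (G : Set X) : Prop :=
  ∃ (n : ℕ) (F : Fin n → Set X), (∀ i, MuAtom μ (F i)) ∧ G = ⋃ i, F i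

/-- `L^∞_G`: the measurable functions that are essentially bounded on `G`. -/
def Linf {X : Type*} [MeasurableSpace X] (μ : Measure X) (G : Set X) : Set (Mble X) :=
  {f | ∃ M₀ : ℝ, 0 < M₀ ∧ ∃ N : Set X, MeasurableSet N ∧ μ N = 0 ∧
        ∀ x ∈ G \ N, |f.1 x| ≤ M₀}

/-- The intersection `⋂_{G ∈ 𝒜_>} L^∞_G`. -/
def InterLinf {X : Type*} [MeasurableSpace X] (μ : Measure X) : Set (Mble X) :=
  ⋂ G ∈ {A : Set X | MeasurableSet A ∧ 0 < μ A ∧ μ A < ⊤}, Linf μ G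

/-- The zero function as an element of `Mble X`. -/
def zeroM {X : Type*} [MeasurableSpace X] : Mble X := ⟨fun _ => 0, measurable_const⟩

/-- `μ` is hemifinite: some sequence in `𝒜_>` almost contains every member of `𝒜_>`. -/
def Hemifinite {X : Type*} [MeasurableSpace X] (μ : Measure X) : Prop :=
  ∃ A : ℕ → Set X, (∀ n, MeasurableSet (A n) ∧ 0 < μ (A n) ∧ μ (A n) < ⊤) ∧
    ∀ F : Set X, MeasurableSet F → 0 < μ F → μ F < ⊤ → ∃ n, μ (F \ A n) = 0

/-- `G⁺`: functions strictly positive μ-almost everywhere on `G`. -/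
def Gplus {X : Type*} [MeasurableSpace X] (μ : Measure X) (G : Set X) : Set (Mble X) :=
  {f | ∃ N : Set X, MeasurableSet N ∧ μ N = 0 ∧ ∀ x ∈ G \ N, 0 < f.1 x}

/-- `G⁰`: functions nonnegative μ-almost everywhere on `G`. -/
def Gzero {X : Type*} [MeasurableSpace X] (μ : Measure X) (G : Set X) : Set (Mble X) :=
  {f | ∃ N : Set X, MeasurableSet N ∧ μ N = 0 ∧ ∀ x ∈ G \ N, 0 ≤ f.1 x}

instance {X : Type*} [MeasurableSpace X] : Add (Mble X) :=
  ⟨fun f g => ⟨f.1 + g.1, f.2.add g.2⟩⟩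

/-!
Modulo null sets, the balls around `f` with finite-measure base sets form a neighbourhood basis
at `f`. If countably many base sets suffice, the topology is first countable, hence
Fréchet–Urysohn, hence sequential.

Conversely, say that `f` is countably carried if countably many sets of finite measure almost
contain all the finite-measure sets on which `|f|` is essentially bounded away from zero. If
`u n → f` and `ε ≤ |f|` on `F`, then `ε / 2 ≤ |u n|` almost everywhere on `F` for some `n`, so
the countably carried functions are sequentially closed. They are also dense: `f` agrees on `A`
with its cut-off to `A`, which is carried by `A` alone. In a sequential space they are therefore
all of `M`, and for the constant function `1` this is hemifiniteness.
-/

section Coverings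

variable {X : Type*} [MeasurableSpace X] {μ : Measure X}

/-- The measurable sets of finite measure, null sets included. -/
def finMeasurableSets (μ : Measure X) : Set (Set X) :=
  {F | MeasurableSet F ∧ μ F < ⊤}

/-- Countably many measurable sets of finite measure almost contain every member of `𝒞`. Applied
to `finMeasurableSets μ`, this is hemifiniteness without the positivity requirement. -/
def AECountablyCovered (μ : Measure X) (𝒞 : Set (Set X)) : Prop :=
  ∃ S ⊆ finMeasurableSets μ, S.Countable ∧ ∀ F ∈ 𝒞, ∃ A ∈ S, F ≤ᵐ[μ] A

theorem empty_mem_finMeasurableSets : ∅ ∈ finMeasurableSets μ :=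
  ⟨MeasurableSet.empty, by simp only [measure_empty, ENNReal.zero_lt_top]⟩

theorem union_mem_finMeasurableSets {A B : Set X} (hA : A ∈ finMeasurableSets μ)
    (hB : B ∈ finMeasurableSets μ) : A ∪ B ∈ finMeasurableSets μ :=
  ⟨hA.1.union hB.1, measure_union_lt_top hA.2 hB.2⟩

theorem AECountablyCovered.mono {𝒞 𝒟 : Set (Set X)} (h : AECountablyCovered μ 𝒟) (h𝒞 : 𝒞 ⊆ 𝒟) :
    AECountablyCovered μ 𝒞 :=
  let ⟨S, hSfin, hScount, hcov⟩ := h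
  ⟨S, hSfin, hScount, fun F hF => hcov F (h𝒞 hF)⟩

theorem AECountablyCovered.iUnion {ι : Type*} [Countable ι] {𝒞 : ι → Set (Set X)}
    (h : ∀ i, AECountablyCovered μ (𝒞 i)) : AECountablyCovered μ (⋃ i, 𝒞 i) := by
  choose S hSfin hScount hcov using h
  refine ⟨⋃ i, S i, iUnion_subset hSfin, countable_iUnion hScount, fun F hF => ?_⟩
  obtain ⟨i, hFi⟩ := mem_iUnion.1 hF
  obtain ⟨A, hA, hFA⟩ := hcov i F hFi
  exact ⟨A, mem_iUnion_of_mem i hA, hFA⟩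

theorem Hemifinite.aeCountablyCovered (h : Hemifinite μ) :
    AECountablyCovered μ (finMeasurableSets μ) := by
  obtain ⟨A, hA, hcov⟩ := h
  refine ⟨range A, range_subset_iff.2 fun n => ⟨(hA n).1, (hA n).2.2⟩, countable_range A, ?_⟩
  rintro F ⟨hF, hFfin⟩
  rcases eq_zero_or_pos (μ F) with hF0 | hF0
  · exact ⟨A 0, mem_range_self 0, ae_le_set.2 (measure_mono_null sdiff_subset hF0)⟩
  · obtain ⟨n, hn⟩ := hcov F hF hF0 hFfin
    exact ⟨A n, mem_range_self n, ae_le_set.2 hn⟩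

theorem AECountablyCovered.hemifinite (h : AECountablyCovered μ (finMeasurableSets μ))
    {P : Set X} (hP : P ∈ finMeasurableSets μ) (hP0 : 0 < μ P) : Hemifinite μ := by
  obtain ⟨S, hSfin, hScount, hcov⟩ := h
  have hSne : S.Nonempty :=
    let ⟨A, hA, _⟩ := hcov ∅ empty_mem_finMeasurableSets
    ⟨A, hA⟩
  obtain ⟨A, rfl⟩ := hScount.exists_eq_range hSne
  -- Adjoining `P` makes every covering set non-null.
  have hAP : ∀ n, A n ∪ P ∈ finMeasurableSets μ := fun n =>
    union_mem_finMeasurableSets (hSfin (mem_range_self n)) hP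
  refine ⟨fun n => A n ∪ P, fun n => ⟨(hAP n).1, hP0.trans_le (measure_mono subset_union_right),
    (hAP n).2⟩, fun F hF _ hFfin => ?_⟩
  obtain ⟨_, ⟨n, rfl⟩, hFA⟩ := hcov F ⟨hF, hFfin⟩
  exact ⟨n, ae_le_set.1 (hFA.trans subset_union_left.eventuallyLE)⟩

theorem hemifinite_iff_aeCountablyCovered (hP : ∃ P, MeasurableSet P ∧ 0 < μ P ∧ μ P < ⊤) :
    Hemifinite μ ↔ AECountablyCovered μ (finMeasurableSets μ) :=
  let ⟨_, hPm, hP0, hPfin⟩ := hP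
  ⟨Hemifinite.aeCountablyCovered, fun h => h.hemifinite ⟨hPm, hPfin⟩ hP0⟩

end Coverings

section Balls

variable {X : Type*} [MeasurableSpace X] {μ : Measure X} {f g : Mble X} {A B : Set X} {δ ε : ℝ}

theorem mem_fBall_iff :
    g ∈ FBall μ f A ε ↔ ∃ b < ε, ∀ᵐ x ∂μ, x ∈ A → |f.1 x - g.1 x| ≤ b := by
  constructor
  · rintro ⟨N, -, hN0, b, hb, hfg⟩
    refine ⟨b, hb, ?_⟩
    filter_upwards [measure_eq_zero_iff_ae_notMem.1 hN0] with x hxN hxA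
    exact hfg x ⟨hxA, hxN⟩
  · rintro ⟨b, hb, hfg⟩
    obtain ⟨N, hsub, hN, hN0⟩ := exists_measurable_superset_of_null (ae_iff.1 hfg)
    refine ⟨N, hN, hN0, b, hb, fun x hx => ?_⟩
    by_contra hlt
    exact hx.2 (hsub fun himp => hlt (himp hx.1))

theorem mem_fBall_of_eqOn (hε : 0 < ε) (hfg : EqOn f.1 g.1 A) : g ∈ FBall μ f A ε :=
  mem_fBall_iff.2 ⟨0, hε, .of_forall fun x hx => by rw [hfg hx, sub_self, abs_zero]⟩

theorem fBall_subset_fBall (hAB : A ≤ᵐ[μ] B) (hδε : δ ≤ ε) :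
    FBall μ f B δ ⊆ FBall μ f A ε := by
  intro g hg
  obtain ⟨b, hb, hfg⟩ := mem_fBall_iff.1 hg
  refine mem_fBall_iff.2 ⟨b, hb.trans_le hδε, ?_⟩
  filter_upwards [hAB, hfg] with x hxAB hx hxA
  exact hx (hxAB hxA)

theorem exists_fBall_subset_of_mem (hg : g ∈ FBall μ f A ε) :
    ∃ δ > 0, FBall μ g A δ ⊆ FBall μ f A ε := by
  obtain ⟨b, hb, hfg⟩ := mem_fBall_iff.1 hg
  refine ⟨ε - b, sub_pos.2 hb, fun h hh => ?_⟩
  obtain ⟨c, hc, hgh⟩ := mem_fBall_iff.1 hh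
  refine mem_fBall_iff.2 ⟨b + c, by linarith, ?_⟩
  filter_upwards [hfg, hgh] with x hxfg hxgh hxA
  exact (abs_sub_le _ _ _).trans (add_le_add (hxfg hxA) (hxgh hxA))

theorem isTopologicalBasis_fBall (μ : Measure X) :
    TopologicalSpace.IsTopologicalBasis (t := FTop μ)
      {S | ∃ (f : Mble X) (A : Set X) (ε : ℝ),
        MeasurableSet A ∧ μ A < ⊤ ∧ 0 < ε ∧ S = FBall μ f A ε} := by
  let := FTop μ
  refine ⟨?_, eq_univ_of_forall fun f => ?_, rfl⟩
  · rintro _ ⟨f, A, ε, hA, hAfin, -, rfl⟩ _ ⟨g, B, δ, hB, hBfin, -, rfl⟩ h ⟨hhf, hhg⟩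
    obtain ⟨ε', hε', hsubf⟩ := exists_fBall_subset_of_mem hhf
    obtain ⟨δ', hδ', hsubg⟩ := exists_fBall_subset_of_mem hhg
    have hmin : 0 < min ε' δ' := lt_min hε' hδ'
    exact ⟨FBall μ h (A ∪ B) (min ε' δ'),
      ⟨h, A ∪ B, min ε' δ', hA.union hB, measure_union_lt_top hAfin hBfin, hmin, rfl⟩,
      mem_fBall_of_eqOn hmin (eqOn_refl _ _),
      subset_inter
        ((fBall_subset_fBall subset_union_left.eventuallyLE (min_le_left _ _)).trans hsubf)
        ((fBall_subset_fBall subset_union_right.eventuallyLE (min_le_right _ _)).trans hsubg)⟩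
  · have hempty : ∅ ∈ finMeasurableSets μ := empty_mem_finMeasurableSets
    exact ⟨FBall μ f ∅ 1, ⟨f, ∅, 1, hempty.1, hempty.2, one_pos, rfl⟩,
      mem_fBall_of_eqOn one_pos (eqOn_refl _ _)⟩

theorem hasBasis_nhds_fBall (μ : Measure X) (f : Mble X) :
    (@nhds _ (FTop μ) f).HasBasis (fun p : Set X × ℝ => p.1 ∈ finMeasurableSets μ ∧ 0 < p.2)
      (fun p => FBall μ f p.1 p.2) := by
  let := FTop μ
  refine (isTopologicalBasis_fBall μ).nhds_hasBasis.to_hasBasis ?_ ?_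
  · rintro _ ⟨⟨g, A, ε, hA, hAfin, -, rfl⟩, hf⟩
    obtain ⟨δ, hδ, hsub⟩ := exists_fBall_subset_of_mem hf
    exact ⟨(A, δ), ⟨⟨hA, hAfin⟩, hδ⟩, hsub⟩
  · rintro ⟨A, ε⟩ ⟨⟨hA, hAfin⟩, hε⟩
    exact ⟨_, ⟨⟨f, A, ε, hA, hAfin, hε, rfl⟩, mem_fBall_of_eqOn hε (eqOn_refl _ _)⟩, Subset.rfl⟩

theorem AECountablyCovered.firstCountableTopology
    (h : AECountablyCovered μ (finMeasurableSets μ)) :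
    @FirstCountableTopology (Mble X) (FTop μ) := by
  let := FTop μ
  obtain ⟨S, hSfin, hScount, hcov⟩ := h
  refine ⟨fun f => ?_⟩
  have hbasis : (𝓝 f).HasBasis (fun p : Set X × ℕ => p ∈ S ×ˢ univ)
      (fun p => FBall μ f p.1 (1 / ((p.2 : ℝ) + 1))) := by
    refine (hasBasis_nhds_fBall μ f).to_hasBasis ?_ ?_
    · rintro ⟨F, ε⟩ ⟨hF, hε⟩
      obtain ⟨A, hA, hFA⟩ := hcov F hF
      obtain ⟨k, hk⟩ := exists_nat_one_div_lt hε
      exact ⟨(A, k), ⟨hA, mem_univ k⟩, fBall_subset_fBall hFA hk.le⟩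
    · rintro ⟨A, k⟩ ⟨hA, -⟩
      exact ⟨(A, 1 / ((k : ℝ) + 1)), ⟨hSfin hA, Nat.one_div_pos_of_nat⟩, Subset.rfl⟩
  exact Filter.HasCountableBasis.isCountablyGenerated ⟨hbasis, hScount.prod countable_univ⟩

end Balls

section CountablyCarried

variable {X : Type*} [MeasurableSpace X] {μ : Measure X}

/-- The measurable sets of finite measure on which `|f|` is essentially bounded away from zero. -/
def boundedAwaySets (μ : Measure X) (f : Mble X) : Set (Set X) :=
  {F ∈ finMeasurableSets μ | ∃ ε > 0, ∀ᵐ x ∂μ, x ∈ F → ε ≤ |f.1 x|}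

/-- The functions that are essentially bounded away from zero only on sets almost contained in one
of countably many fixed sets of finite measure. -/
def countablyCarried (μ : Measure X) : Set (Mble X) :=
  {f | AECountablyCovered μ (boundedAwaySets μ f)}

theorem boundedAwaySets_const {c : ℝ} (hc : c ≠ 0) :
    boundedAwaySets μ ⟨fun _ => c, measurable_const⟩ = finMeasurableSets μ :=
  sep_eq_self_iff_mem_true.2 fun _ _ => ⟨|c|, abs_pos.2 hc, .of_forall fun _ _ => le_rfl⟩

theorem boundedAwaySets_subset_iUnion_of_tendsto {ι : Type*} {l : Filter ι} [l.NeBot]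
    {u : ι → Mble X} {f : Mble X} (hu : Filter.Tendsto u l (@nhds _ (FTop μ) f)) :
    boundedAwaySets μ f ⊆ ⋃ i, boundedAwaySets μ (u i) := by
  rintro F ⟨hF, ε, hε, hf⟩
  have hball : FBall μ f F (ε / 2) ∈ @nhds _ (FTop μ) f :=
    (hasBasis_nhds_fBall μ f).mem_of_mem (i := (F, ε / 2)) ⟨hF, half_pos hε⟩
  obtain ⟨i, hi⟩ := (hu.eventually_mem hball).exists
  obtain ⟨b, hb, hfu⟩ := mem_fBall_iff.1 hi
  refine mem_iUnion.2 ⟨i, hF, ε / 2, half_pos hε, ?_⟩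
  filter_upwards [hf, hfu] with x hxf hxfu hxF
  have htri := abs_sub_abs_le_abs_sub (f.1 x) ((u i).1 x)
  linarith [hxf hxF, hxfu hxF]

theorem isSeqClosed_countablyCarried (μ : Measure X) :
    @IsSeqClosed _ (FTop μ) (countablyCarried μ) := fun _ _ hu hlim =>
  (AECountablyCovered.iUnion hu).mono (boundedAwaySets_subset_iUnion_of_tendsto hlim)

theorem indicator_mem_countablyCarried {A : Set X} (hA : A ∈ finMeasurableSets μ) (f : Mble X) :
    ⟨A.indicator f.1, f.2.indicator hA.1⟩ ∈ countablyCarried μ := by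
  refine ⟨{A}, singleton_subset_iff.2 hA, countable_singleton A, ?_⟩
  rintro F ⟨-, ε, hε, hf⟩
  refine ⟨A, rfl, ?_⟩
  filter_upwards [hf] with x hx hxF
  exact mem_of_indicator_ne_zero (abs_pos.1 (hε.trans_le (hx hxF)))

theorem dense_countablyCarried (μ : Measure X) : @Dense _ (FTop μ) (countablyCarried μ) := by
  let := FTop μ
  intro f
  refine (mem_closure_iff_nhds_basis (hasBasis_nhds_fBall μ f)).2 ?_
  rintro ⟨A, ε⟩ ⟨hA, hε⟩
  exact ⟨_, indicator_mem_countablyCarried hA f, mem_fBall_of_eqOn hε (eqOn_indicator.symm)⟩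

theorem aeCountablyCovered_of_sequentialSpace (h : @SequentialSpace (Mble X) (FTop μ)) :
    AECountablyCovered μ (finMeasurableSets μ) := by
  let := FTop μ
  have huniv : countablyCarried μ = univ := by
    rw [← (isSeqClosed_countablyCarried μ).isClosed.closure_eq,
      (dense_countablyCarried μ).closure_eq]
  have hone : ⟨fun _ => 1, measurable_const⟩ ∈ countablyCarried μ := huniv ▸ mem_univ _
  exact boundedAwaySets_const (μ := μ) one_ne_zero ▸ hone

theorem tfae_firstCountable_frechetUrysohn_sequential_fTop (μ : Measure X) :
    List.TFAE [AECountablyCovered μ (finMeasurableSets μ),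
      @FirstCountableTopology (Mble X) (FTop μ),
      @FrechetUrysohnSpace (Mble X) (FTop μ),
      @SequentialSpace (Mble X) (FTop μ)] := by
  let := FTop μ
  tfae_have 1 → 2 := AECountablyCovered.firstCountableTopology
  tfae_have 2 → 3 := fun _ => inferInstance
  tfae_have 3 → 4 := fun _ => inferInstance
  tfae_have 4 → 1 := aeCountablyCovered_of_sequentialSpace
  tfae_finish

end CountablyCarried

theorem exists_subset_pos_finite {X : Type*} [MeasurableSpace X] {μ : Measure X}
    (hsub : ∀ A : Set X, MeasurableSet A → μ A = ⊤ →
      ∃ B, B ⊆ A ∧ MeasurableSet B ∧ 0 < μ B ∧ μ B < ⊤)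
    {A : Set X} (hA : MeasurableSet A) (hpos : 0 < μ A) :
    ∃ B, B ⊆ A ∧ MeasurableSet B ∧ 0 < μ B ∧ μ B < ⊤ := by
  rcases eq_top_or_lt_top (μ A) with htop | hfin
  · exact hsub A hA htop
  · exact ⟨A, Subset.rfl, hA, hpos, hfin⟩

theorem stmt19_general {X : Type*} [MeasurableSpace X] (μ : Measure X)
    (hP : ∃ P, MeasurableSet P ∧ 0 < μ P ∧ μ P < ⊤) :
    (Hemifinite μ ↔ @FrechetUrysohnSpace (Mble X) (FTop μ)) ∧
    (Hemifinite μ ↔ @SequentialSpace (Mble X) (FTop μ)) := by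
  have hcov := hemifinite_iff_aeCountablyCovered hP
  have htfae := tfae_firstCountable_frechetUrysohn_sequential_fTop μ
  exact ⟨hcov.trans (htfae.out 0 2), hcov.trans (htfae.out 0 3)⟩

/-- `μ` is hemifinite iff `M_F` is Fréchet–Urysohn iff `M_F` is
sequential. -/
theorem stmt19 {X : Type*} [MeasurableSpace X] (μ : Measure X)
    (hpos : 0 < μ Set.univ)
    (hsub : ∀ A : Set X, MeasurableSet A → μ A = ⊤ →
      ∃ B, B ⊆ A ∧ MeasurableSet B ∧ 0 < μ B ∧ μ B < ⊤) :
    (Hemifinite μ ↔ @FrechetUrysohnSpace (Mble X) (FTop μ)) ∧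
    (Hemifinite μ ↔ @SequentialSpace (Mble X) (FTop μ)) := by
  obtain ⟨P, -, hP⟩ := exists_subset_pos_finite hsub MeasurableSet.univ hpos
  exact stmt19_general μ ⟨P, hP⟩
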